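/- Fix positive integers c and n, positive integers x₁,…,xₙ with d = x₁+⋯+xₙ satisfying the genericity condition Σ_{i∈I} xᵢ ≠ Σ_{j∈J} xⱼ for all pairs of distinct subsets I, J ⊆ {1,…,n}, and equip the rectangle Δ of width c and height d with boundary data μ₁ = (c), μ₂ = (1,…,1) (c parts equal to 1), ν₁ = (x₁,…,xₙ), ν₂ = (d). Then for every admissible pair (A,B), the positive multiplicity of the corresponding lattice path satisfies mult₊(γ(A,B)) = x₁·x₂·⋯·xₙ. -/

import Mathlib

open Classical

noncomputable section

namespace TropPaths

/-- Lattice points of the plane. -/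
abbrev Pt := ℤ × ℤ

/-- The order on `ℤ²` induced by `λ(x,y) = x - εy` for a small irrational `ε > 0`:
`p ≺ q` iff `p₁ < q₁`, or (`p₁ = q₁` and `p₂ > q₂`). -/
def lamLT (p q : Pt) : Prop := p.1 < q.1 ∨ (p.1 = q.1 ∧ q.2 < p.2)

/-- A lattice path, recorded as the list of its points, is `λ`-increasing. -/
def Increasing (γ : List Pt) : Prop := List.Chain' lamLT γ

/-- The determinant of two vectors in `ℤ²`. -/
def det (u v : Pt) : ℤ := u.1 * v.2 - u.2 * v.1

/-- The `k`-th point of a path (junk value out of range). -/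
def pt (γ : List Pt) (k : ℕ) : Pt := γ.getD k (0, 0)

/-- The `k`-th step vector of a path. -/
def stepAt (γ : List Pt) (k : ℕ) : Pt := pt γ (k + 1) - pt γ k

/-- The list of all step vectors of a path. -/
def steps (γ : List Pt) : List Pt := List.zipWith (fun a b => b - a) γ γ.tail

/-- The multiset of down steps `(0,-s)`, `s > 0`, of a path. -/
def downSteps (γ : List Pt) : Multiset Pt :=
  Multiset.filter (fun v => v.1 = 0 ∧ v.2 < 0) (steps γ : Multiset Pt)

/-- The multiset of up-right steps of a path. -/
def upRightSteps (γ : List Pt) : Multiset Pt :=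
  Multiset.filter (fun v => 0 < v.1 ∧ 0 < v.2) (steps γ : Multiset Pt)

/-- The path makes a turn of sign `s` at the (interior) index `k`; for left turns
`s = (0 < ·)`, for right turns `s = (· < 0)`. -/
def TurnAt (s : ℤ → Prop) (γ : List Pt) (k : ℕ) : Prop :=
  0 < k ∧ k + 1 < γ.length ∧ s (det (pt γ k - pt γ (k - 1)) (pt γ (k + 1) - pt γ k))

/-- `k` is the first turn of sign `s` of the path. -/
def FirstTurn (s : ℤ → Prop) (γ : List Pt) (k : ℕ) : Prop :=
  TurnAt s γ k ∧ ∀ j, TurnAt s γ j → k ≤ j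

/-- Twice the area of the triangle with vertices `γ(k-1), γ(k), γ(k+1)`. -/
def triArea2 (γ : List Pt) (k : ℕ) : ℕ :=
  (det (pt γ k - pt γ (k - 1)) (pt γ (k + 1) - pt γ k)).natAbs

/-- The path obtained by cutting the corner at index `k`, i.e. deleting the point `γ(k)`. -/
def cut (γ : List Pt) (k : ℕ) : List Pt := γ.eraseIdx k

/-- The path obtained by completing the parallelogram at index `k`, i.e. replacing
`γ(k)` by `γ(k-1) + γ(k+1) - γ(k)`. -/
def push (γ : List Pt) (k : ℕ) : List Pt :=
  γ.set k (pt γ (k - 1) + pt γ (k + 1) - pt γ k)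

/-- All points of the path lie in `Δ`. -/
def Inside (Δ : Set Pt) (γ : List Pt) : Prop := ∀ z ∈ γ, z ∈ Δ

/-- Mikhalkin's multiplicity recursion, as a functional relation: `MultRel Δ Init s γ m`
means that the recursion (performed always at the *first* turn of sign `s`) assigns the
multiplicity `m` to the path `γ`.  Here `Δ` is the set of lattice points of the polygon,
`Init` the set of initial paths (of multiplicity `1`), and `s` the turn sign
(`0 < ·` for left turns / `mult₊`, `· < 0` for right turns / `mult₋`). -/
inductive MultRel (Δ : Set Pt) (Init : List Pt → Prop) (s : ℤ → Prop) : List Pt → ℕ → Prop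
  | init {γ : List Pt} : Init γ → MultRel Δ Init s γ 1
  | noTurn {γ : List Pt} : ¬Init γ → (∀ k, ¬TurnAt s γ k) → MultRel Δ Init s γ 0
  | stepIn {γ : List Pt} {k m' m'' : ℕ} : ¬Init γ → FirstTurn s γ k →
      Inside Δ (push γ k) → MultRel Δ Init s (cut γ k) m' →
      MultRel Δ Init s (push γ k) m'' →
      MultRel Δ Init s γ (triArea2 γ k * m' + m'')
  | stepOut {γ : List Pt} {k m' : ℕ} : ¬Init γ → FirstTurn s γ k →
      ¬Inside Δ (push γ k) → MultRel Δ Init s (cut γ k) m' →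
      MultRel Δ Init s γ (triArea2 γ k * m')

/-- The multiplicity function determined by Mikhalkin's recursion. -/
def multOf (Δ : Set Pt) (Init : List Pt → Prop) (s : ℤ → Prop) (γ : List Pt) : ℕ :=
  if h : ∃ m, MultRel Δ Init s γ m then h.choose else 0

/-- `γ ≺ δ`: the path `δ` is obtained from `γ` by finitely many steps of the multiplicity
recursion (each step cuts the corner at the first turn of sign `s`, or completes the
parallelogram there). -/
inductive Reaches (Δ : Set Pt) (Init : List Pt → Prop) (s : ℤ → Prop) : List Pt → List Pt → Prop
  | refl (γ : List Pt) : Reaches Δ Init s γ γ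
  | cutStep {γ δ : List Pt} {k : ℕ} : ¬Init γ → FirstTurn s γ k →
      Reaches Δ Init s (cut γ k) δ → Reaches Δ Init s γ δ
  | pushStep {γ δ : List Pt} {k : ℕ} : ¬Init γ → FirstTurn s γ k →
      Inside Δ (push γ k) → Reaches Δ Init s (push γ k) δ → Reaches Δ Init s γ δ

/-- The lattice path starting at `p` with the given list of step vectors. -/
def pathFrom : Pt → List Pt → List Pt
  | p, [] => [p]
  | p, v :: vs => p :: pathFrom (p + v) vs

/-- Horizontal (rightward) steps of the given sizes. -/
def hSteps (l : List ℕ) : List Pt := l.map fun k => ((k : ℤ), 0)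

/-- Vertical downward steps of the given sizes. -/
def dSteps (l : List ℕ) : List Pt := l.map fun k => ((0 : ℤ), -(k : ℤ))

/-- A multiset of positive integers is a partition of `t`. -/
def IsPartition (m : Multiset ℕ) (t : ℕ) : Prop := (∀ k ∈ m, 0 < k) ∧ m.sum = t

/-! ## The rectangle `[0,c] × [0,d]` -/

/-- The lattice points of the rectangle with vertices `(0,0), (c,0), (0,d), (c,d)`. -/
def rect (c d : ℕ) : Set Pt := {z | 0 ≤ z.1 ∧ z.1 ≤ (c : ℤ) ∧ 0 ≤ z.2 ∧ z.2 ≤ (d : ℤ)}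

/-- `β₊`-initial paths of the rectangle: from `p = (0,d)` clockwise along the top edge with
step sizes the parts of `μ₂` and then down the right edge with step sizes the parts of `ν₂`. -/
def InitPlusRect (d : ℕ) (μ₂ ν₂ : Multiset ℕ) (γ : List Pt) : Prop :=
  ∃ s t : List ℕ, (s : Multiset ℕ) = μ₂ ∧ (t : Multiset ℕ) = ν₂ ∧
    γ = pathFrom (0, (d : ℤ)) (hSteps s ++ dSteps t)

/-- `β₋`-initial paths of the rectangle: from `p = (0,d)` counterclockwise down the left edge
with step sizes the parts of `ν₁` and then along the bottom edge with step sizes the parts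
of `μ₁`. -/
def InitMinusRect (d : ℕ) (μ₁ ν₁ : Multiset ℕ) (γ : List Pt) : Prop :=
  ∃ s t : List ℕ, (s : Multiset ℕ) = ν₁ ∧ (t : Multiset ℕ) = μ₁ ∧
    γ = pathFrom (0, (d : ℤ)) (dSteps s ++ hSteps t)

/-- `mult₊` for the rectangle with boundary data `(μ₁, μ₂, ν₁, ν₂)`. -/
def multPlusRect (c d : ℕ) (μ₂ ν₂ : Multiset ℕ) : List Pt → ℕ :=
  multOf (rect c d) (InitPlusRect d μ₂ ν₂) (fun x => 0 < x)

/-- `mult₋` for the rectangle with boundary data `(μ₁, μ₂, ν₁, ν₂)`. -/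
def multMinusRect (c d : ℕ) (μ₁ ν₁ : Multiset ℕ) : List Pt → ℕ :=
  multOf (rect c d) (InitMinusRect d μ₁ ν₁) (fun x => x < 0)

/-- `mult = mult₊ · mult₋` for the rectangle with boundary data `(μ₁, μ₂, ν₁, ν₂)`. -/
def multRect (c d : ℕ) (μ₁ μ₂ ν₁ ν₂ : Multiset ℕ) (γ : List Pt) : ℕ :=
  multPlusRect c d μ₂ ν₂ γ * multMinusRect c d μ₁ ν₁ γ

/-- A `λ`-increasing lattice path from `(0,d)` to `(c,0)` contained in the rectangle. -/
def IsPathRect (c d : ℕ) (γ : List Pt) : Prop :=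
  Increasing γ ∧ γ.head? = some (0, (d : ℤ)) ∧ γ.getLast? = some ((c : ℤ), 0) ∧
    Inside (rect c d) γ

/-- The genericity condition: all subset sums of the `xᵢ` are distinct. -/
def Generic {n : ℕ} (x : Fin n → ℕ) : Prop :=
  ∀ I J : Finset (Fin n), I ≠ J → ∑ i ∈ I, x i ≠ ∑ j ∈ J, x j

/-! ## Admissible pairs and the paths `γ(A,B)` -/

/-- An admissible pair `(A,B)`: pairwise disjoint sequences `A₀,…,A_{c-1}` in `{1,…,n}`
whose entries together partition `{1,…,n}`, and pairwise disjoint subsets `B₀,…,B_{c-1}`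
with union `{1,…,n}`, such that `B₀ ≠ ∅` and
`B_k ⊆ (A₀ ∪ ⋯ ∪ A_k) \ (B₀ ∪ ⋯ ∪ B_{k-1})` for all `k`. -/
def IsAdmissible {c n : ℕ} (A : Fin c → List (Fin n)) (B : Fin c → Finset (Fin n)) : Prop :=
  ((List.ofFn A).flatten : Multiset (Fin n)) = (Finset.univ : Finset (Fin n)).val ∧
  (∀ i : Fin n, ∃! k : Fin c, i ∈ B k) ∧
  (∀ k : Fin c, (k : ℕ) = 0 → (B k).Nonempty) ∧
  ∀ k : Fin c, B k ⊆
    (Finset.univ.filter fun i => ∃ j : Fin c, j ≤ k ∧ i ∈ A j) \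
      (Finset.univ.filter fun i => ∃ j : Fin c, j < k ∧ i ∈ B j)

/-- The steps of `γ(A,B)` in the column `x = k`: down steps of sizes `xᵢ`, `i ∈ A_k`, in
order, followed by the step `(1, Σ_{i ∈ B_k} xᵢ)` to the next column. -/
def colSteps {c n : ℕ} (x : Fin n → ℕ) (A : Fin c → List (Fin n))
    (B : Fin c → Finset (Fin n)) (k : Fin c) : List Pt :=
  ((A k).map fun i => ((0 : ℤ), -(x i : ℤ))) ++ [((1 : ℤ), ∑ i ∈ B k, (x i : ℤ))]

/-- The lattice path `γ(A,B)` associated to an admissible pair, from `(0,d)` to `(c,0)`,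
whose last step is the full right edge. -/
def gammaAB {c n : ℕ} (x : Fin n → ℕ) (A : Fin c → List (Fin n))
    (B : Fin c → Finset (Fin n)) : List Pt :=
  pathFrom (0, ((∑ i, x i : ℕ) : ℤ))
    ((List.ofFn (colSteps x A B)).flatten ++ [((0 : ℤ), -((∑ i, x i : ℕ) : ℤ))])

/-! ## The trapezoid of Lemma 4.? -/

/-- The lattice points of the trapezoid with vertices `(0,0), (0,a), (1,a), (1,b)`. -/
def trap (a b : ℕ) : Set Pt :=
  {z | 0 ≤ z.1 ∧ z.1 ≤ 1 ∧ (b : ℤ) * z.1 ≤ z.2 ∧ z.2 ≤ (a : ℤ)}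

/-- `β₊`-initial paths of the trapezoid: one step of lattice length 1 along the top edge,
then down the right edge with step sizes the parts of `βright`. -/
def InitPlusTrap (a : ℕ) (βright : Multiset ℕ) (γ : List Pt) : Prop :=
  ∃ t : List ℕ, (t : Multiset ℕ) = βright ∧
    γ = pathFrom (0, (a : ℤ)) (((1 : ℤ), (0 : ℤ)) :: dSteps t)

/-! ## Automorphisms of a partition -/

/-- `|Aut ν| = ∏_k m_k(ν)!` where `m_k(ν)` is the number of parts of `ν` equal to `k`. -/
def autCard (m : Multiset ℕ) : ℕ :=
  (m.dedup.map fun k => (m.count k).factorial).prod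

/-! In terms of step vectors, cutting a corner of a lattice path adds two consecutive steps and
completing a parallelogram swaps them; the weight of the first option is the determinant of the two
steps. So when the path runs along the top edge to the column `x = k`, descends it with steps of
sizes `x i`, `i ∈ L`, and leaves it by the step `(1, b)`, the recursion moves that step upwards past
the down steps one after the other. Each down step `i` is either absorbed, which contributes the
factor `x i` and lowers `b` to `b - x i`, or pushed into the column `x = k + 1`. Once all are gone,
the step `(1, e)` starts on the top edge: `e > 0` would leave the rectangle, and `e < 0` forces
multiplicity `0`. The multiplicity is therefore the sum, over the subsets `S ⊆ L` with
`∑ i ∈ S, x i = b`, of `∏ i ∈ S, x i` times the multiplicity of the path that runs one unit further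
along the top edge and descends the next column by the steps in `L \ S` followed by the old ones.

For `γ(A,B)` we have `b = ∑ i ∈ B k, x i`, so by genericity only `S = B k` contributes. Over all
columns the factors `∏ i ∈ B k, x i` multiply to `∏ i, x i`, and the path that remains is initial.
-/

section Paths

variable {Δ : Set Pt} {s : ℤ → Prop} (p : Pt) (u : List Pt) (a b : Pt) (v : List Pt)

theorem length_pathFrom (w : List Pt) : (pathFrom p w).length = w.length + 1 := by
  induction w generalizing p with
  | nil => rfl
  | cons a w ih => simp [pathFrom, ih]

theorem pt_pathFrom_append : pt (pathFrom p (u ++ v)) u.length = p + u.sum := by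
  induction u generalizing p with
  | nil => cases v <;> simp [pathFrom, pt]
  | cons c u ih => simpa [pathFrom, pt, add_assoc] using ih (p + c)

theorem pt_pathFrom_append_cons :
    pt (pathFrom p (u ++ a :: v)) (u.length + 1) = p + u.sum + a := by
  simpa [add_assoc] using pt_pathFrom_append p (u ++ [a]) v

theorem pt_pathFrom_append_cons_cons :
    pt (pathFrom p (u ++ a :: b :: v)) (u.length + 1 + 1) = p + u.sum + a + b := by
  simpa [add_assoc] using pt_pathFrom_append_cons p (u ++ [a]) b v

theorem det_pathFrom_append_cons_cons :
    det (pt (pathFrom p (u ++ a :: b :: v)) (u.length + 1)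
        - pt (pathFrom p (u ++ a :: b :: v)) (u.length + 1 - 1))
      (pt (pathFrom p (u ++ a :: b :: v)) (u.length + 1 + 1)
        - pt (pathFrom p (u ++ a :: b :: v)) (u.length + 1)) = det a b := by
  rw [pt_pathFrom_append_cons_cons, pt_pathFrom_append_cons, Nat.add_sub_cancel,
    pt_pathFrom_append, add_sub_cancel_left, add_sub_cancel_left]

theorem triArea2_pathFrom :
    triArea2 (pathFrom p (u ++ a :: b :: v)) (u.length + 1) = (det a b).natAbs := by
  rw [triArea2, det_pathFrom_append_cons_cons]

theorem cut_pathFrom :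
    cut (pathFrom p (u ++ a :: b :: v)) (u.length + 1) = pathFrom p (u ++ (a + b) :: v) := by
  induction u generalizing p with
  | nil => simp [cut, pathFrom, add_assoc]
  | cons c u ih => simpa [cut, pathFrom] using ih (p + c)

theorem push_pathFrom :
    push (pathFrom p (u ++ a :: b :: v)) (u.length + 1) = pathFrom p (u ++ b :: a :: v) := by
  have set_corner : ∀ q, (pathFrom q (u ++ a :: b :: v)).set (u.length + 1) (q + u.sum + b)
      = pathFrom q (u ++ b :: a :: v) := by
    induction u with
    | nil => simp [pathFrom, add_assoc, add_comm a b]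
    | cons c u ih => simpa [pathFrom, add_assoc] using fun q => ih (q + c)
  rw [push, pt_pathFrom_append_cons_cons, pt_pathFrom_append_cons, Nat.add_sub_cancel,
    pt_pathFrom_append, ← set_corner]
  congr 1
  abel

theorem turnAt_pathFrom_iff {w : List Pt} {k : ℕ} :
    TurnAt s (pathFrom p w) k ↔
      ∃ u a b v, w = u ++ a :: b :: v ∧ k = u.length + 1 ∧ s (det a b) := by
  constructor
  · rintro ⟨hpos, hlt, hs⟩
    obtain ⟨j, rfl⟩ : ∃ j, k = j + 1 := ⟨k - 1, by omega⟩
    rw [length_pathFrom] at hlt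
    have hw : w = w.take j ++ w[j] :: w[j + 1] :: w.drop (j + 2) := by
      rw [← List.drop_eq_getElem_cons, ← List.drop_eq_getElem_cons, List.take_append_drop]
    have hj : (w.take j).length = j := by
      rw [List.length_take]
      omega
    refine ⟨w.take j, w[j], w[j + 1], w.drop (j + 2), hw, by rw [hj], ?_⟩
    have hdet := det_pathFrom_append_cons_cons p (w.take j) w[j] w[j + 1] (w.drop (j + 2))
    rw [← hw, hj] at hdet
    rwa [← hdet]
  · rintro ⟨u, a, b, v, rfl, rfl, hs⟩
    refine ⟨by omega, ?_, ?_⟩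
    · simp [length_pathFrom]
    · rwa [det_pathFrom_append_cons_cons]

variable {a b} in
theorem firstTurn_pathFrom (hab : s (det a b))
    (hu : (u ++ [a]).IsChain fun a b => ¬s (det a b)) :
    FirstTurn s (pathFrom p (u ++ a :: b :: v)) (u.length + 1) := by
  refine ⟨(turnAt_pathFrom_iff p).2 ⟨u, a, b, v, rfl, rfl, hab⟩, fun j hj => ?_⟩
  obtain ⟨u', a', b', v', hw, rfl, hab'⟩ := (turnAt_pathFrom_iff p).1 hj
  by_contra! hlt
  have hprefix : u' ++ [a', b'] <+: u ++ [a] := by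
    refine List.prefix_of_prefix_length_le (l₃ := u ++ a :: b :: v) ?_ ?_ ?_
    · exact ⟨v', by simp [hw]⟩
    · exact ⟨b :: v, by simp⟩
    · simp only [List.length_append, List.length_cons, List.length_nil]
      omega
  exact List.isChain_iff_forall_rel_of_append_cons_cons.1
    (hu.infix hprefix.isInfix) (l₂ := []) rfl hab'

theorem steps_pathFrom (w : List Pt) : steps (pathFrom p w) = w := by
  induction w generalizing p with
  | nil => rfl
  | cons a w ih =>
    cases w with
    | nil => simp [steps, pathFrom]
    | cons b w => simpa [steps, pathFrom] using ih (p + a)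

theorem pathFrom_injective : Function.Injective (pathFrom p) :=
  Function.LeftInverse.injective (g := steps) (steps_pathFrom p)

theorem inside_pathFrom_cons {w : List Pt} :
    Inside Δ (pathFrom p (a :: w)) ↔ p ∈ Δ ∧ Inside Δ (pathFrom (p + a) w) :=
  List.forall_mem_cons

theorem Inside.start_mem {p : Pt} {w : List Pt} (h : Inside Δ (pathFrom p w)) : p ∈ Δ :=
  h p (by cases w <;> simp [pathFrom])

theorem inside_pathFrom_append :
    Inside Δ (pathFrom p (u ++ v)) ↔
      Inside Δ (pathFrom p u) ∧ Inside Δ (pathFrom (p + u.sum) v) := by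
  induction u generalizing p with
  | nil => simpa [Inside, pathFrom] using Inside.start_mem (Δ := Δ) (p := p) (w := v)
  | cons c u ih =>
    rw [List.cons_append, inside_pathFrom_cons, inside_pathFrom_cons, ih, List.sum_cons,
      add_assoc, and_assoc]

theorem Inside.merge_steps {p : Pt} {u v : List Pt} {a b : Pt}
    (h : Inside Δ (pathFrom p (u ++ a :: b :: v))) :
    Inside Δ (pathFrom p (u ++ (a + b) :: v)) := by
  rw [inside_pathFrom_append, inside_pathFrom_cons] at h ⊢
  rw [inside_pathFrom_cons, add_assoc _ a b] at h
  exact ⟨h.1, h.2.1, h.2.2.2⟩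

end Paths

section Recursion

variable {Δ : Set Pt} {Init : List Pt → Prop} {s : ℤ → Prop}

theorem FirstTurn.unique {γ : List Pt} {k l : ℕ} (hk : FirstTurn s γ k) (hl : FirstTurn s γ l) :
    k = l :=
  le_antisymm (hk.2 l hl.1) (hl.2 k hk.1)

theorem exists_firstTurn {γ : List Pt} (h : ∃ k, TurnAt s γ k) : ∃ k, FirstTurn s γ k :=
  ⟨Nat.find h, Nat.find_spec h, fun _ hj => Nat.find_min' h hj⟩

theorem MultRel.unique {γ : List Pt} {m m' : ℕ} (h : MultRel Δ Init s γ m)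
    (h' : MultRel Δ Init s γ m') : m = m' := by
  induction h generalizing m' with
  | init hi => cases h' <;> first | rfl | contradiction
  | noTurn hi hno =>
    cases h' with
    | init => contradiction
    | noTurn => rfl
    | stepIn _ hf | stepOut _ hf => exact absurd hf.1 (hno _)
  | stepIn hi hf hin _ _ ihcut ihpush =>
    cases h' with
    | init => contradiction
    | noTurn _ hno => exact absurd hf.1 (hno _)
    | stepIn _ hf' _ hcut hpush =>
      obtain rfl := hf.unique hf'
      rw [ihcut hcut, ihpush hpush]
    | stepOut _ hf' hout =>
      obtain rfl := hf.unique hf'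
      contradiction
  | stepOut hi hf hout _ ihcut =>
    cases h' with
    | init => contradiction
    | noTurn _ hno => exact absurd hf.1 (hno _)
    | stepIn _ hf' hin =>
      obtain rfl := hf.unique hf'
      contradiction
    | stepOut _ hf' _ hcut =>
      obtain rfl := hf.unique hf'
      rw [ihcut hcut]

theorem MultRel.multOf_eq {γ : List Pt} {m : ℕ} (h : MultRel Δ Init s γ m) :
    multOf Δ Init s γ = m := by
  have hex : ∃ m, MultRel Δ Init s γ m := ⟨m, h⟩
  rw [multOf, dif_pos hex]
  exact hex.choose_spec.unique h

theorem multOf_of_init {γ : List Pt} (h : Init γ) : multOf Δ Init s γ = 1 :=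
  (MultRel.init h).multOf_eq

/-- The number of pairs of steps, adjacent or not, that turn with sign `s`. Completing a
parallelogram swaps two adjacent steps, so this number drops and the recursion terminates. -/
def turnPairs (s : ℤ → Prop) : List Pt → ℕ
  | [] => 0
  | a :: w => w.countP (fun b => s (det a b)) + turnPairs s w

theorem det_swap (a b : Pt) : det b a = -det a b := by
  unfold det
  ring

theorem turnPairs_swap_lt (hs : ∀ z, s z → ¬s (-z)) (u : List Pt) {a b : Pt} (v : List Pt)
    (hab : s (det a b)) : turnPairs s (u ++ b :: a :: v) < turnPairs s (u ++ a :: b :: v) := by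
  induction u with
  | nil =>
    have hba : ¬s (det b a) := det_swap a b ▸ hs _ hab
    simp only [List.nil_append, turnPairs, List.countP_cons, hab, hba, decide_true, decide_false]
    simp only [if_true, Bool.false_eq_true, if_false]
    omega
  | cons c u ih =>
    have hperm : (u ++ b :: a :: v).Perm (u ++ a :: b :: v) := (List.Perm.swap a b v).append_left u
    simp only [List.cons_append, turnPairs, hperm.countP_eq]
    omega

theorem exists_multRel_pathFrom (hs : ∀ z, s z → ¬s (-z)) (p : Pt) (w : List Pt) :
    ∃ m, MultRel Δ Init s (pathFrom p w) m := by
  by_cases hi : Init (pathFrom p w)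
  · exact ⟨1, .init hi⟩
  by_cases ht : ∃ k, TurnAt s (pathFrom p w) k
  · obtain ⟨k, hf⟩ := exists_firstTurn ht
    obtain ⟨u, a, b, v, rfl, rfl, hab⟩ := (turnAt_pathFrom_iff p).1 hf.1
    have _ := turnPairs_swap_lt hs u v hab
    obtain ⟨m', hcut⟩ := exists_multRel_pathFrom hs p (u ++ (a + b) :: v)
    obtain ⟨m'', hpush⟩ := exists_multRel_pathFrom hs p (u ++ b :: a :: v)
    rw [← cut_pathFrom] at hcut
    rw [← push_pathFrom] at hpush
    by_cases hin : Inside Δ (push (pathFrom p (u ++ a :: b :: v)) (u.length + 1))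
    · exact ⟨_, .stepIn hi hf hin hcut hpush⟩
    · exact ⟨_, .stepOut hi hf hin hcut⟩
  · exact ⟨0, .noTurn hi (not_exists.1 ht)⟩
termination_by (w.length, turnPairs s w)
decreasing_by all_goals simp_all [Prod.lex_def]

theorem multRel_multOf_pathFrom (hs : ∀ z, s z → ¬s (-z)) (p : Pt) (w : List Pt) :
    MultRel Δ Init s (pathFrom p w) (multOf Δ Init s (pathFrom p w)) := by
  obtain ⟨m, hm⟩ := exists_multRel_pathFrom (Δ := Δ) (Init := Init) hs p w
  rwa [hm.multOf_eq]

theorem multOf_pathFrom_of_firstTurn (hs : ∀ z, s z → ¬s (-z)) {p : Pt} {u v : List Pt}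
    {a b : Pt} (hi : ¬Init (pathFrom p (u ++ a :: b :: v)))
    (hf : FirstTurn s (pathFrom p (u ++ a :: b :: v)) (u.length + 1)) :
    multOf Δ Init s (pathFrom p (u ++ a :: b :: v)) =
      (det a b).natAbs * multOf Δ Init s (pathFrom p (u ++ (a + b) :: v)) +
        if Inside Δ (pathFrom p (u ++ b :: a :: v))
        then multOf Δ Init s (pathFrom p (u ++ b :: a :: v)) else 0 := by
  have hcut : MultRel Δ Init s (cut (pathFrom p (u ++ a :: b :: v)) (u.length + 1))
      (multOf Δ Init s (pathFrom p (u ++ (a + b) :: v))) := by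
    rw [cut_pathFrom]
    exact multRel_multOf_pathFrom hs p _
  have hpush : MultRel Δ Init s (push (pathFrom p (u ++ a :: b :: v)) (u.length + 1))
      (multOf Δ Init s (pathFrom p (u ++ b :: a :: v))) := by
    rw [push_pathFrom]
    exact multRel_multOf_pathFrom hs p _
  rw [← triArea2_pathFrom p u a b v]
  split_ifs with hin
  · exact (MultRel.stepIn hi hf (by rwa [push_pathFrom]) hcut hpush).multOf_eq
  · exact (MultRel.stepOut hi hf (by rwa [push_pathFrom]) hcut).multOf_eq

theorem multOf_pathFrom_eq_zero {p : Pt} {Q : List Pt → Prop}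
    (hinit : ∀ w, Q w → ¬Init (pathFrom p w))
    (hcut : ∀ u a b v, Q (u ++ a :: b :: v) → Q (u ++ (a + b) :: v))
    (hpush : ∀ u a b v, Q (u ++ a :: b :: v) → Q (u ++ b :: a :: v))
    {w : List Pt} (hw : Q w) : multOf Δ Init s (pathFrom p w) = 0 := by
  have eq_zero : ∀ {γ m}, MultRel Δ Init s γ m → ∀ w, γ = pathFrom p w → Q w → m = 0 := by
    intro γ m h
    induction h with
    | init hi => exact fun w hγ hQ => absurd (hγ ▸ hi) (hinit w hQ)
    | noTurn => exact fun _ _ _ => rfl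
    | stepIn _ hf _ _ _ ihcut ihpush =>
      rintro w rfl hQ
      obtain ⟨u, a, b, v, rfl, rfl, -⟩ := (turnAt_pathFrom_iff p).1 hf.1
      rw [ihcut _ (cut_pathFrom ..) (hcut _ _ _ _ hQ), ihpush _ (push_pathFrom ..)
        (hpush _ _ _ _ hQ), mul_zero]
    | stepOut _ hf _ _ ihcut =>
      rintro w rfl hQ
      obtain ⟨u, a, b, v, rfl, rfl, -⟩ := (turnAt_pathFrom_iff p).1 hf.1
      rw [ihcut _ (cut_pathFrom ..) (hcut _ _ _ _ hQ), mul_zero]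
  unfold multOf
  split_ifs with h
  · exact eq_zero h.choose_spec w rfl hw
  · rfl

end Recursion

section Hook

-- In `hSteps` and `dSteps` the cast is elaborated as a coercion `List ℕ → List ℤ` of the whole
-- list, so the next two equations do not hold definitionally.
theorem hSteps_eq_map (l : List ℕ) : hSteps l = l.map fun k : ℕ => ((k : ℤ), (0 : ℤ)) := by
  induction l <;> simp_all [hSteps]

theorem dSteps_eq_map (l : List ℕ) : dSteps l = l.map fun k : ℕ => ((0 : ℤ), -(k : ℤ)) := by
  induction l <;> simp_all [dSteps]

theorem dSteps_append (l l' : List ℕ) : dSteps (l ++ l') = dSteps l ++ dSteps l' := by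
  simp only [dSteps_eq_map, List.map_append]

theorem dSteps_singleton (a : ℕ) : dSteps [a] = [((0 : ℤ), -(a : ℤ))] := rfl

/-- The steps of the path that runs `k` unit steps along the top edge and then descends the
column `x = k` with step sizes `l`. -/
def hook (k : ℕ) (l : List ℕ) : List Pt := hSteps (List.replicate k 1) ++ dSteps l

theorem hook_append (k : ℕ) (l l' : List ℕ) : hook k (l ++ l') = hook k l ++ dSteps l' := by
  rw [hook, hook, dSteps_append, List.append_assoc]

theorem hook_nil_append_unit (k : ℕ) (w : List Pt) :
    hook k [] ++ ((1 : ℤ), (0 : ℤ)) :: w = hook (k + 1) [] ++ w := by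
  simp [hook, hSteps_eq_map, dSteps_eq_map, List.replicate_succ']

theorem isChain_hSteps_append_dSteps (l l' : List ℕ) :
    (hSteps l ++ dSteps l').IsChain fun a b => ¬0 < det a b := by
  refine List.Pairwise.isChain (List.pairwise_append.2 ⟨?_, ?_, ?_⟩)
  · simp [hSteps_eq_map, List.pairwise_map, det, List.pairwise_of_forall]
  · simp [dSteps_eq_map, List.pairwise_map, det, List.pairwise_of_forall]
  · simp only [hSteps_eq_map, dSteps_eq_map, List.forall_mem_map, det]
    intro i _ j _
    nlinarith

theorem inside_rect_hSteps_append {c d : ℕ} {j h : ℤ} (hj : 0 ≤ j) (l : List ℕ) (w : List Pt) :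
    Inside (rect c d) (pathFrom (j, h) (hSteps l ++ w)) ↔
      Inside (rect c d) (pathFrom (j + (l.sum : ℕ), h) w) := by
  rw [hSteps_eq_map]
  induction l generalizing j with
  | nil => simp
  | cons a l ih =>
    have hja : 0 ≤ j + a := by omega
    simp only [List.map_cons, List.cons_append, inside_pathFrom_cons, Prod.mk_add_mk, add_zero,
      ih hja, List.sum_cons, Nat.cast_add, ← add_assoc, and_iff_right_iff_imp]
    intro hin
    have hend := hin.start_mem
    simp only [rect, Set.mem_ofPred_eq] at hend ⊢
    omega

theorem inside_rect_dSteps_append {c d : ℕ} {j h : ℤ} (hd : h ≤ d) (l : List ℕ) (w : List Pt) :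
    Inside (rect c d) (pathFrom (j, h) (dSteps l ++ w)) ↔
      Inside (rect c d) (pathFrom (j, h - (l.sum : ℕ)) w) := by
  rw [dSteps_eq_map]
  induction l generalizing h with
  | nil => simp
  | cons a l ih =>
    have hha : h - a ≤ d := by omega
    simp only [List.map_cons, List.cons_append, inside_pathFrom_cons, Prod.mk_add_mk, add_zero,
      ← sub_eq_add_neg, ih hha, List.sum_cons, Nat.cast_add, ← sub_sub, and_iff_right_iff_imp]
    intro hin
    have hend := hin.start_mem
    simp only [rect, Set.mem_ofPred_eq] at hend ⊢
    omega

theorem inside_rect_hook_append {c d k : ℕ} {l : List ℕ} {w : List Pt} :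
    Inside (rect c d) (pathFrom (0, (d : ℤ)) (hook k l ++ w)) ↔
      Inside (rect c d) (pathFrom ((k : ℤ), (d : ℤ) - (l.sum : ℕ)) w) := by
  rw [hook, List.append_assoc, inside_rect_hSteps_append le_rfl, inside_rect_dSteps_append le_rfl]
  simp

end Hook

section Vanishing

theorem lamLT_add {q a b : Pt} (ha : lamLT q a) (hb : ¬lamLT b 0) : lamLT q (a + b) := by
  simp only [lamLT, Prod.fst_add, Prod.snd_add, Prod.fst_zero, Prod.snd_zero] at *
  omega

theorem not_lamLT_zero_add {a b : Pt} (ha : ¬lamLT a 0) (hb : ¬lamLT b 0) :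
    ¬lamLT (a + b) 0 := by
  simp only [lamLT, Prod.fst_add, Prod.snd_add, Prod.fst_zero, Prod.snd_zero] at *
  omega

theorem not_lamLT_zero_down (a : ℕ) : ¬lamLT ((0 : ℤ), -(a : ℤ)) 0 := by
  simp [lamLT]

theorem not_lamLT_zero_right (b : ℤ) : ¬lamLT ((1 : ℤ), b) 0 := by
  simp [lamLT]

theorem not_lamLT_zero_of_mem_dSteps {l : List ℕ} : ∀ v ∈ dSteps l, ¬lamLT v 0 := by
  simp [dSteps_eq_map, not_lamLT_zero_down]

theorem not_lamLT_zero_of_mem_hook {k : ℕ} {l : List ℕ} : ∀ v ∈ hook k l, ¬lamLT v 0 := by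
  simp only [hook, List.forall_mem_append]
  refine ⟨by simp [hSteps_eq_map, not_lamLT_zero_right], not_lamLT_zero_of_mem_dSteps⟩

/-- The multiplicity `mult₊` in the rectangle `[0,c] × [0,d]`, with all parts of `μ₂` equal to
`1` and `ν₂ = ν`, of the path from `(0,d)` with steps `w`. -/
def multPlusSteps (c d : ℕ) (ν : Multiset ℕ) (w : List Pt) : ℕ :=
  multPlusRect c d (Multiset.replicate c 1) ν (pathFrom (0, (d : ℤ)) w)

variable {c d : ℕ} {ν : Multiset ℕ}

theorem initPlusRect_pathFrom_iff {w : List Pt} :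
    InitPlusRect d (Multiset.replicate c 1) ν (pathFrom (0, (d : ℤ)) w) ↔
      ∃ l : List ℕ, (l : Multiset ℕ) = ν ∧ w = hook c l := by
  simp only [InitPlusRect, (pathFrom_injective _).eq_iff, ← Multiset.coe_replicate,
    Multiset.coe_eq_coe, List.perm_replicate, exists_and_left, exists_eq_left, hook]

theorem multPlusSteps_hook (l : List ℕ) : multPlusSteps c d l (hook c l) = 1 :=
  multOf_of_init (initPlusRect_pathFrom_iff.2 ⟨l, rfl, rfl⟩)

theorem not_initPlusRect_of_leftTurn {u v : List Pt} {a b : Pt} (hab : 0 < det a b) :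
    ¬InitPlusRect d (Multiset.replicate c 1) ν (pathFrom (0, (d : ℤ)) (u ++ a :: b :: v)) := by
  rw [initPlusRect_pathFrom_iff]
  rintro ⟨l, -, hw⟩
  exact List.isChain_iff_forall_rel_of_append_cons_cons.1 (isChain_hSteps_append_dSteps _ l)
    hw.symm hab

-- Cutting a corner adds two steps that are not `λ`-negative, so a step `λ`-larger than `(1, 0)`
-- survives every branch of the recursion; no initial path has such a step.
theorem multPlusSteps_eq_zero {w : List Pt} (hw : ∀ v ∈ w, ¬lamLT v 0)
    (hlong : ∃ v ∈ w, lamLT (1, 0) v) : multPlusSteps c d ν w = 0 := by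
  refine multOf_pathFrom_eq_zero
    (Q := fun w => (∀ v ∈ w, ¬lamLT v 0) ∧ ∃ v ∈ w, lamLT (1, 0) v) ?_ ?_ ?_ ⟨hw, hlong⟩
  · rintro w ⟨-, v, hv, hlong⟩ hinit
    obtain ⟨l, -, rfl⟩ := initPlusRect_pathFrom_iff.1 hinit
    simp only [hook, hSteps_eq_map, dSteps_eq_map, List.mem_append, List.map_replicate,
      List.mem_replicate, List.mem_map] at hv
    rcases hv with ⟨-, rfl⟩ | ⟨j, -, rfl⟩ <;> simp [lamLT] at hlong
  · simp only [List.forall_mem_append, List.forall_mem_cons]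
    rintro u a b v ⟨⟨hu, ha, hb, hv⟩, z, hz, hlong⟩
    refine ⟨⟨hu, not_lamLT_zero_add ha hb, hv⟩, ?_⟩
    simp only [List.mem_append, List.mem_cons] at hz ⊢
    rcases hz with hz | rfl | rfl | hz
    · exact ⟨z, .inl hz, hlong⟩
    · exact ⟨z + b, .inr (.inl rfl), lamLT_add hlong hb⟩
    · exact ⟨a + z, .inr (.inl rfl), add_comm z a ▸ lamLT_add hlong ha⟩
    · exact ⟨z, .inr (.inr hz), hlong⟩
  · intro u a b v
    have hperm : (u ++ b :: a :: v).Perm (u ++ a :: b :: v) := (List.Perm.swap a b v).append_left u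
    simp only [hperm.mem_iff, imp_self]

end Vanishing

section Column

variable {c d : ℕ} {ν : Multiset ℕ}

theorem down_add_right (a : ℕ) (b : ℤ) :
    ((0 : ℤ), -(a : ℤ)) + ((1 : ℤ), b) = ((1 : ℤ), b - a) := by
  rw [Prod.mk_add_mk, zero_add, neg_add_eq_sub]

theorem det_down_right (a : ℕ) (b : ℤ) : det ((0 : ℤ), -(a : ℤ)) ((1 : ℤ), b) = a := by
  simp [det]

theorem multPlusSteps_hook_concat (k : ℕ) (l : List ℕ) {a : ℕ} (ha : 0 < a) (b : ℤ)
    (t : List Pt) :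
    multPlusSteps c d ν (hook k (l ++ [a]) ++ (1, b) :: t) =
      a * multPlusSteps c d ν (hook k l ++ (1, b - a) :: t) +
        if Inside (rect c d) (pathFrom (0, (d : ℤ)) (hook k l ++ (1, b) :: dSteps [a] ++ t))
        then multPlusSteps c d ν (hook k l ++ (1, b) :: dSteps [a] ++ t) else 0 := by
  have hturn : 0 < det ((0 : ℤ), -(a : ℤ)) ((1 : ℤ), b) := by
    rw [det_down_right]
    exact_mod_cast ha
  have hchain : (hook k l ++ [((0 : ℤ), -(a : ℤ))]).IsChain fun a b => ¬0 < det a b := by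
    rw [← dSteps_singleton, ← hook_append]
    exact isChain_hSteps_append_dSteps _ _
  have hrec := multOf_pathFrom_of_firstTurn (Δ := rect c d) (v := t) (fun z hz => by omega)
    (not_initPlusRect_of_leftTurn (c := c) (ν := ν) hturn)
    (firstTurn_pathFrom (0, (d : ℤ)) _ _ hturn hchain)
  rw [det_down_right, Int.natAbs_natCast, down_add_right] at hrec
  simp only [hook_append, dSteps_singleton, List.append_assoc, List.cons_append, List.nil_append]
  exact hrec

theorem multPlusSteps_hook_nil {k : ℕ} {b : ℤ} {t : List Pt} (ht : ∀ v ∈ t, ¬lamLT v 0)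
    (hin : Inside (rect c d) (pathFrom (0, (d : ℤ)) (hook k [] ++ (1, b) :: t))) :
    multPlusSteps c d ν (hook k [] ++ (1, b) :: t) =
      if 0 = b then multPlusSteps c d ν (hook (k + 1) [] ++ t) else 0 := by
  have hb : b ≤ 0 := by
    rw [inside_rect_hook_append, inside_pathFrom_cons] at hin
    simpa [rect] using hin.2.start_mem.2.2.2
  split_ifs with h
  · rw [← h, hook_nil_append_unit]
  · refine multPlusSteps_eq_zero ?_ ⟨(1, b), by simp, .inr ⟨rfl, hb.lt_of_ne (Ne.symm h)⟩⟩
    simp only [List.forall_mem_append, List.forall_mem_cons]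
    exact ⟨not_lamLT_zero_of_mem_hook, not_lamLT_zero_right b, ht⟩

theorem inside_rect_hook_swap {k : ℕ} {l : List ℕ} {a : ℕ} {b : ℤ} {t : List Pt}
    (hin : Inside (rect c d) (pathFrom (0, (d : ℤ)) (hook k (l ++ [a]) ++ (1, b) :: t)))
    (hb : b ≤ (l.sum : ℕ)) :
    Inside (rect c d) (pathFrom (0, (d : ℤ)) (hook k l ++ (1, b) :: dSteps [a] ++ t)) := by
  rw [hook_append, dSteps_singleton, List.append_assoc] at hin
  rw [dSteps_singleton, List.append_assoc]
  simp only [List.cons_append, List.nil_append, inside_rect_hook_append, inside_pathFrom_cons]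
    at hin ⊢
  obtain ⟨hcorner, -, hend⟩ := hin
  have htop := hend.start_mem
  refine ⟨hcorner, ?_, by rwa [add_right_comm]⟩
  simp only [rect, Set.mem_ofPred_eq, Prod.mk_add_mk] at hcorner htop ⊢
  omega

variable {ι : Type*} [DecidableEq ι]

theorem sum_powerset_insert_filter_sum_eq {M N : Type*} [AddCommGroup M] [DecidableEq M]
    [AddCommMonoid N] {s : Finset ι} {a : ι} (ha : a ∉ s) (y : ι → M) (b : M) (f : Finset ι → N) :
    ∑ S ∈ (insert a s).powerset with ∑ i ∈ S, y i = b, f S =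
      ∑ S ∈ s.powerset with ∑ i ∈ S, y i = b - y a, f (insert a S) +
        ∑ S ∈ s.powerset with ∑ i ∈ S, y i = b, f S := by
  simp only [Finset.sum_filter, Finset.sum_powerset_insert ha]
  rw [add_comm]
  refine congrArg (· + _) (Finset.sum_congr rfl fun S hS => ?_)
  have haS : a ∉ S := fun h => ha (Finset.mem_powerset.1 hS h)
  simp only [Finset.sum_insert haS, eq_sub_iff_add_eq']

theorem powerset_filter_sum_eq_of_sum_lt (x : ι → ℕ) {L : List ι} (hL : L.Nodup) {b : ℤ}
    (hb : ((L.map x).sum : ℕ) < b) :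
    (L.toFinset.powerset.filter fun S => ∑ i ∈ S, (x i : ℤ) = b) = ∅ := by
  refine Finset.filter_false_of_mem fun S hS hSb => hb.not_ge ?_
  rw [← hSb, ← List.sum_toFinset x hL]
  exact_mod_cast Finset.sum_le_sum_of_subset (f := x) (Finset.mem_powerset.1 hS)

theorem filter_notMem_concat_of_notMem {L : List ι} {a : ι} {S : Finset ι} (ha : a ∉ S) :
    (L ++ [a]).filter (· ∉ S) = L.filter (· ∉ S) ++ [a] := by
  simp [ha]

theorem filter_notMem_insert_concat {L : List ι} {a : ι} (ha : a ∉ L) (S : Finset ι) :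
    (L ++ [a]).filter (· ∉ insert a S) = L.filter (· ∉ S) := by
  rw [List.filter_append, List.filter_singleton]
  simp only [Finset.mem_insert_self, not_true_eq_false, decide_false, cond_false, List.append_nil]
  refine List.filter_congr fun i hi => ?_
  simp [ne_of_mem_of_not_mem hi ha]

theorem multPlusSteps_hook_append_right (x : ι → ℕ) (k : ℕ) {L : List ι} (hL : L.Nodup)
    (hx : ∀ i ∈ L, 0 < x i) (b : ℤ) {t : List Pt} (ht : ∀ v ∈ t, ¬lamLT v 0)
    (hin : Inside (rect c d) (pathFrom (0, (d : ℤ)) (hook k (L.map x) ++ (1, b) :: t))) :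
    multPlusSteps c d ν (hook k (L.map x) ++ (1, b) :: t) =
      ∑ S ∈ L.toFinset.powerset with ∑ i ∈ S, (x i : ℤ) = b,
        (∏ i ∈ S, x i) *
          multPlusSteps c d ν (hook (k + 1) ((L.filter (· ∉ S)).map x) ++ t) := by
  induction L using List.reverseRecOn generalizing b t with
  | nil => simpa [Finset.sum_filter] using multPlusSteps_hook_nil ht hin
  | append_singleton L a ih =>
    obtain ⟨haL, hL⟩ : a ∉ L ∧ L.Nodup := List.nodup_cons.1 (List.nodup_append_comm.1 hL)
    obtain ⟨hx, ha⟩ : (∀ i ∈ L, 0 < x i) ∧ 0 < x a := by simpa [or_imp, forall_and] using hx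
    rw [List.map_append, List.map_singleton] at hin ⊢
    have hmerge := hin
    rw [hook_append, dSteps_singleton, List.append_assoc] at hmerge
    replace hmerge := down_add_right (x a) b ▸ hmerge.merge_steps
    have hswap : (if Inside (rect c d)
          (pathFrom (0, (d : ℤ)) (hook k (L.map x) ++ (1, b) :: dSteps [x a] ++ t))
        then multPlusSteps c d ν (hook k (L.map x) ++ (1, b) :: dSteps [x a] ++ t) else 0) =
        ∑ S ∈ L.toFinset.powerset with ∑ i ∈ S, (x i : ℤ) = b, (∏ i ∈ S, x i) *
          multPlusSteps c d ν
            (hook (k + 1) ((L.filter (· ∉ S)).map x) ++ (dSteps [x a] ++ t)) := by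
      split_ifs with hin'
      · rw [List.append_assoc, List.cons_append] at hin' ⊢
        exact ih hL hx b (List.forall_mem_append.2 ⟨not_lamLT_zero_of_mem_dSteps, ht⟩) hin'
      · have hb := not_le.1 fun h => hin' (inside_rect_hook_swap hin h)
        rw [powerset_filter_sum_eq_of_sum_lt x hL hb, Finset.sum_empty]
    rw [multPlusSteps_hook_concat k _ ha, hswap, ih hL hx _ ht hmerge, List.toFinset_append,
      List.toFinset_cons, List.toFinset_nil, insert_empty_eq, Finset.union_singleton,
      sum_powerset_insert_filter_sum_eq (mt List.mem_toFinset.1 haL), Finset.mul_sum]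
    have haS : ∀ S ⊆ L.toFinset, a ∉ S := fun S hS h => haL (List.mem_toFinset.1 (hS h))
    congr 1 <;> refine Finset.sum_congr rfl fun S hS => ?_ <;>
      replace haS := haS S (Finset.mem_powerset.1 (Finset.mem_filter.1 hS).1)
    · rw [Finset.prod_insert haS, filter_notMem_insert_concat haL, mul_assoc]
    · rw [filter_notMem_concat_of_notMem haS, List.map_append, List.map_singleton, hook_append,
        List.append_assoc]

end Column

section Admissible

theorem perm_toList_append_filter_notMem {ι : Type*} [DecidableEq ι] {L : List ι} (hL : L.Nodup)
    {S : Finset ι} (hS : S ⊆ L.toFinset) : L.Perm (S.toList ++ L.filter (· ∉ S)) := by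
  have hfilter : (L.filter (· ∈ S)).Perm S.toList := by
    refine (List.perm_ext_iff_of_nodup (hL.filter _) S.nodup_toList).2 fun i => ?_
    have := @hS i
    simp_all
  simpa only [decide_not] using
    (List.filter_append_perm (· ∈ S) L).symm.trans (hfilter.append_right _)

theorem Generic.powerset_filter_sum_eq {n : ℕ} {x : Fin n → ℕ} (hx : Generic x)
    {S U : Finset (Fin n)} (hS : S ⊆ U) :
    (U.powerset.filter fun T => ∑ i ∈ T, (x i : ℤ) = ∑ i ∈ S, (x i : ℤ)) = {S} := by
  ext T
  rw [Finset.mem_filter, Finset.mem_powerset, Finset.mem_singleton]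
  constructor
  · rintro ⟨-, h⟩
    by_contra hne
    exact hx T S hne (by exact_mod_cast h)
  · rintro rfl
    exact ⟨hS, rfl⟩

/-- The data `(A, B)` of the columns still to be treated is admissible given the list `M` of
indices whose down steps have been made in earlier columns but not yet used by a horizontal
step. -/
structure AdmissibleFrom {ι : Type*} {c : ℕ} (M : List ι) (A : Fin c → List ι)
    (B : Fin c → Finset ι) : Prop where
  nodup : (M ++ (List.ofFn A).flatten).Nodup
  disjoint : Pairwise fun k l => Disjoint (B k) (B l)
  covered : ∀ i ∈ M ++ (List.ofFn A).flatten, ∃ k, i ∈ B k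
  available : ∀ k, ∀ i ∈ B k, i ∈ M ∨ ∃ j ≤ k, i ∈ A j

theorem IsAdmissible.admissibleFrom_nil {c n : ℕ} {A : Fin c → List (Fin n)}
    {B : Fin c → Finset (Fin n)} (h : IsAdmissible A B) : AdmissibleFrom [] A B := by
  obtain ⟨hA, hB, -, hAB⟩ := h
  refine ⟨?_, fun k l hkl => ?_, fun i _ => (hB i).exists, fun k i hi => .inr ?_⟩
  · rw [List.nil_append, ← Multiset.coe_nodup, hA]
    exact Finset.univ.nodup
  · exact Finset.disjoint_left.2 fun i hk hl => hkl ((hB i).unique hk hl)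
  · exact (Finset.mem_filter.1 (Finset.mem_sdiff.1 (hAB k hi)).1).2

section Tail

variable {ι : Type*} {c : ℕ} {M : List ι} {A : Fin (c + 1) → List ι}
  {B : Fin (c + 1) → Finset ι}

theorem AdmissibleFrom.nodup_zero (h : AdmissibleFrom M A B) :
    ((M ++ A 0) ++ (List.ofFn fun k => A k.succ).flatten).Nodup := by
  simpa [List.ofFn_succ] using h.nodup

variable [DecidableEq ι]

theorem AdmissibleFrom.subset_zero (h : AdmissibleFrom M A B) : B 0 ⊆ (M ++ A 0).toFinset := by
  intro i hi
  rw [List.mem_toFinset, List.mem_append]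
  refine (h.available 0 i hi).imp_right ?_
  rintro ⟨j, hj, hij⟩
  rwa [Fin.le_zero_iff.1 hj] at hij

theorem AdmissibleFrom.tail (h : AdmissibleFrom M A B) :
    AdmissibleFrom ((M ++ A 0).filter (· ∉ B 0)) (fun k => A k.succ) fun k => B k.succ where
  nodup := h.nodup_zero.sublist (List.filter_sublist.append_right _)
  disjoint := h.disjoint.comp_of_injective (Fin.succ_injective c)
  covered i hi := by
    have hi0 : i ∉ B 0 := by
      rcases List.mem_append.1 hi with hi | hi
      · simpa using List.of_mem_filter hi
      · exact fun hB => List.disjoint_of_nodup_append h.nodup_zero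
          (List.mem_toFinset.1 (h.subset_zero hB)) hi
    have hmem : i ∈ M ++ (List.ofFn A).flatten := by
      rw [List.ofFn_succ, List.flatten_cons, ← List.append_assoc]
      exact (List.filter_sublist.append_right _).subset hi
    obtain ⟨k, hk⟩ := h.covered i hmem
    obtain ⟨k, rfl⟩ := Fin.exists_succ_eq.2 fun hk0 : k = 0 => hi0 (hk0 ▸ hk)
    exact ⟨k, hk⟩
  available k i hi := by
    have hi0 : i ∉ B 0 := Finset.disjoint_left.1 (h.disjoint (Fin.succ_ne_zero k)) hi
    simp only [List.mem_filter, List.mem_append, hi0, not_false_eq_true, decide_true, and_true]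
    rcases h.available k.succ i hi with hM | ⟨j, hj, hij⟩
    · exact .inl (.inl hM)
    · cases j using Fin.cases with
      | zero => exact .inl (.inr hij)
      | succ j => exact .inr ⟨j, Fin.succ_le_succ_iff.1 hj, hij⟩

theorem AdmissibleFrom.perm_zero (h : AdmissibleFrom M A B) :
    (M ++ A 0).Perm ((B 0).toList ++ (M ++ A 0).filter (· ∉ B 0)) :=
  perm_toList_append_filter_notMem h.nodup_zero.of_append_left h.subset_zero

theorem AdmissibleFrom.perm (h : AdmissibleFrom M A B) :
    (M ++ (List.ofFn A).flatten).Perm ((B 0).toList ++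
      ((M ++ A 0).filter (· ∉ B 0) ++ (List.ofFn fun k => A k.succ).flatten)) := by
  rw [List.ofFn_succ, List.flatten_cons, ← List.append_assoc, ← List.append_assoc]
  exact h.perm_zero.append_right _

theorem AdmissibleFrom.sum_tail_le (h : AdmissibleFrom M A B) (x : ι → ℕ) :
    (((M ++ A 0).filter (· ∉ B 0) ++ (List.ofFn fun k => A k.succ).flatten).map x).sum ≤
      ((M ++ (List.ofFn A).flatten).map x).sum := by
  rw [(h.perm.map x).sum_eq, List.map_append (l₁ := (B 0).toList), List.sum_append]
  exact Nat.le_add_left _ _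

end Tail

theorem AdmissibleFrom.eq_nil {ι : Type*} {M : List ι} {A : Fin 0 → List ι}
    {B : Fin 0 → Finset ι} (h : AdmissibleFrom M A B) : M = [] :=
  List.eq_nil_iff_forall_not_mem.2 fun i hi =>
    (h.covered i (List.mem_append_left _ hi)).elim fun k _ => k.elim0

end Admissible

section ColumnPath

variable {c n : ℕ} (x : Fin n → ℕ)

theorem not_lamLT_zero_of_mem_colSteps (A : Fin c → List (Fin n)) (B : Fin c → Finset (Fin n)) :
    ∀ v ∈ (List.ofFn (colSteps x A B)).flatten, ¬lamLT v 0 := by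
  intro v hv
  obtain ⟨k, hk⟩ : ∃ k, v ∈ colSteps x A B k := by simpa using hv
  rw [colSteps, List.mem_append, List.mem_singleton, List.mem_map] at hk
  rcases hk with ⟨i, -, rfl⟩ | rfl
  · exact not_lamLT_zero_down _
  · exact not_lamLT_zero_right _

theorem hook_append_flatten_colSteps (k : ℕ) (M : List (Fin n)) (A : Fin (c + 1) → List (Fin n))
    (B : Fin (c + 1) → Finset (Fin n)) (w : List Pt) :
    hook k (M.map x) ++ ((List.ofFn (colSteps x A B)).flatten ++ w) =
      hook k ((M ++ A 0).map x) ++ (1, ∑ i ∈ B 0, (x i : ℤ)) ::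
        ((List.ofFn (colSteps x (fun k => A k.succ) fun k => B k.succ)).flatten ++ w) := by
  rw [List.ofFn_succ, List.flatten_cons, colSteps, List.map_append, hook_append, dSteps_eq_map,
    List.map_map]
  simp only [List.append_assoc, List.cons_append, List.nil_append]
  rfl

variable {x} {d : ℕ} {t : List ℕ}

theorem AdmissibleFrom.inside {k c' : ℕ} {M : List (Fin n)} {A : Fin c' → List (Fin n)}
    {B : Fin c' → Finset (Fin n)} (h : AdmissibleFrom M A B) (hk : k + c' = c)
    (hd : ((M ++ (List.ofFn A).flatten).map x).sum ≤ d) (ht : t.sum ≤ d) :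
    Inside (rect c d) (pathFrom (0, (d : ℤ))
      (hook k (M.map x) ++ ((List.ofFn (colSteps x A B)).flatten ++ dSteps t))) := by
  induction c' generalizing k M with
  | zero =>
    obtain rfl : k = c := hk
    rw [h.eq_nil, inside_rect_hook_append, List.ofFn_zero, List.flatten_nil, List.nil_append,
      ← List.append_nil (dSteps t), inside_rect_dSteps_append (by simp)]
    simp only [Inside, pathFrom, List.mem_singleton, forall_eq, rect, Set.mem_ofPred_eq,
      List.map_nil, List.sum_nil]
    omega
  | succ c' ih =>
    have hrest := ih h.tail (k := k + 1) (by omega) ((h.sum_tail_le x).trans hd)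
    rw [inside_rect_hook_append] at hrest
    have hcol : ((M ++ A 0).map x).sum =
        ∑ i ∈ B 0, x i + (((M ++ A 0).filter (· ∉ B 0)).map x).sum := by
      rw [(h.perm_zero.map x).sum_eq, List.map_append (l₁ := (B 0).toList), List.sum_append,
        Finset.sum_map_toList]
    rw [List.ofFn_succ, List.flatten_cons, ← List.append_assoc, List.map_append, List.sum_append]
      at hd
    rw [hook_append_flatten_colSteps, inside_rect_hook_append, inside_pathFrom_cons]
    refine ⟨?_, ?_⟩
    · simp only [rect, Set.mem_ofPred_eq]
      omega
    · convert hrest using 2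
      rw [Prod.mk_add_mk, Nat.cast_succ, hcol]
      push_cast
      congr 1
      ring

theorem AdmissibleFrom.multPlusSteps_eq (hgen : Generic x) (hx : ∀ i, 0 < x i) {k c' : ℕ}
    {M : List (Fin n)} {A : Fin c' → List (Fin n)}
    {B : Fin c' → Finset (Fin n)} (h : AdmissibleFrom M A B) (hk : k + c' = c)
    (hd : ((M ++ (List.ofFn A).flatten).map x).sum ≤ d) (ht : t.sum ≤ d) :
    multPlusSteps c d t (hook k (M.map x) ++ ((List.ofFn (colSteps x A B)).flatten ++ dSteps t)) =
      ((M ++ (List.ofFn A).flatten).map x).prod := by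
  induction c' generalizing k M with
  | zero =>
    obtain rfl : k = c := hk
    rw [h.eq_nil, List.ofFn_zero, List.ofFn_zero, List.flatten_nil, List.flatten_nil,
      List.nil_append, List.map_nil, ← hook_append, List.nil_append, multPlusSteps_hook,
      List.append_nil, List.map_nil, List.prod_nil]
  | succ c' ih =>
    have hin := h.inside hk hd ht
    rw [hook_append_flatten_colSteps] at hin ⊢
    rw [multPlusSteps_hook_append_right x k h.nodup_zero.of_append_left (fun i _ => hx i) _
      (List.forall_mem_append.2 ⟨not_lamLT_zero_of_mem_colSteps x _ _,
        not_lamLT_zero_of_mem_dSteps⟩) hin,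
      hgen.powerset_filter_sum_eq h.subset_zero, Finset.sum_singleton,
      ih h.tail (by omega) ((h.sum_tail_le x).trans hd), (h.perm.map x).prod_eq,
      List.map_append (l₁ := (B 0).toList), List.prod_append, Finset.prod_map_toList]

end ColumnPath

/-- For every admissible pair `(A,B)`, the positive multiplicity of
`γ(A,B)` equals `x₁ ⋯ xₙ`. -/
theorem multPlus_gammaAB (c n : ℕ) (hc : 0 < c) (hn : 0 < n)
    (x : Fin n → ℕ) (hx : ∀ i, 0 < x i) (hgen : Generic x)
    (A : Fin c → List (Fin n)) (B : Fin c → Finset (Fin n)) (hAB : IsAdmissible A B) :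
    multPlusRect c (∑ i, x i) (Multiset.replicate c 1) {∑ i, x i} (gammaAB x A B)
      = ∏ i, x i := by
  have hmap : (((List.ofFn A).flatten.map x : List ℕ) : Multiset ℕ) = Finset.univ.val.map x := by
    rw [← Multiset.map_coe, hAB.1]
  have hsum : ((List.ofFn A).flatten.map x).sum = ∑ i, x i := congrArg Multiset.sum hmap
  have hprod : ((List.ofFn A).flatten.map x).prod = ∏ i, x i := congrArg Multiset.prod hmap
  calc
    multPlusRect c (∑ i, x i) (Multiset.replicate c 1) {∑ i, x i} (gammaAB x A B)
      = multPlusSteps c (∑ i, x i) ↑[∑ i, x i]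
          (hook 0 [] ++ ((List.ofFn (colSteps x A B)).flatten ++ dSteps [∑ i, x i])) := rfl
    _ = ((List.ofFn A).flatten.map x).prod :=
      hAB.admissibleFrom_nil.multPlusSteps_eq hgen hx (zero_add c) hsum.le
        List.sum_singleton.le
    _ = ∏ i, x i := hprod

end TropPaths
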